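/- arXiv:1611.02249 — 2 statements merged into one kernel-verified Lean document; each statement's English description precedes it below -/
import Mathlib

section
/- Let U and P be the parsimonious relations on the 28-element set H of major, minor, and augmented triads. In the monoid of binary relations on H under relational composition, U²·P·U² = P·U²·P·U²·P (products of relations written as words, with U² = U·U). -/
/-- The 28-element set of the 24 major and minor triads and the 4 augmented triads:
`Sum.inl n` is the major triad `n_M`, `Sum.inr (Sum.inl n)` is the minor triad `n_m`,
and `Sum.inr (Sum.inr k)` is the augmented triad `k_aug`. -/
abbrev Htriads : Type := (ZMod 12) ⊕ (ZMod 12) ⊕ (ZMod 4)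

/-- Binary relations on `Htriads`. -/
abbrev MRel : Type := Htriads → Htriads → Prop

/-- The monoid of binary relations on `Htriads`: `r * s` relates `x` to `z` iff there is `y`
with `x r y` and `y s z` (i.e. first apply `r`, then `s`), and `1` is the equality relation. -/
instance : Monoid MRel where
  one := fun x y => x = y
  mul := fun r s => fun x z => ∃ y, r x y ∧ s y z
  mul_assoc r s t := by
    funext x z
    apply propext
    constructor
    · rintro ⟨y, ⟨w, hw1, hw2⟩, hy⟩
      exact ⟨w, hw1, y, hw2, hy⟩
    · rintro ⟨w, hw1, y, hy1, hy2⟩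
      exact ⟨y, ⟨w, hw1, hy1⟩, hy2⟩
  one_mul r := by
    funext x z
    apply propext
    constructor
    · rintro ⟨y, rfl, h⟩
      exact h
    · intro h
      exact ⟨x, rfl, h⟩
  mul_one r := by
    funext x z
    apply propext
    constructor
    · rintro ⟨y, h, rfl⟩
      exact h
    · intro h
      exact ⟨z, h, rfl⟩

/-- The major triad on root `n`. -/
def maj (n : ZMod 12) : Htriads := Sum.inl n
/-- The minor triad on root `n`. -/
def mino (n : ZMod 12) : Htriads := Sum.inr (Sum.inl n)
/-- The augmented triad `k_aug`, `k ∈ ℤ/4`. -/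
def aug (k : ZMod 4) : Htriads := Sum.inr (Sum.inr k)

/-- Reduction mod 4 of a pitch class mod 12. -/
def m4 (n : ZMod 12) : ZMod 4 := ZMod.castHom (show (4:ℕ) ∣ 12 by norm_num) (ZMod 4) n

/-- The relation `𝒰`: the symmetric relation relating exactly `n_M` with `(n mod 4)_aug`
and `n_m` with `((n+3) mod 4)_aug`. -/
def Urel : MRel := fun x y =>
  (∃ n : ZMod 12, x = maj n ∧ y = aug (m4 n)) ∨
  (∃ n : ZMod 12, x = aug (m4 n) ∧ y = maj n) ∨
  (∃ n : ZMod 12, x = mino n ∧ y = aug (m4 (n + 3))) ∨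
  (∃ n : ZMod 12, x = aug (m4 (n + 3)) ∧ y = mino n)

/-- The relation `𝒫`: the symmetric relation relating exactly `n_M` with `n_m`,
and each augmented triad with itself. -/
def Prel : MRel := fun x y =>
  (∃ n : ZMod 12, x = maj n ∧ y = mino n) ∨
  (∃ n : ZMod 12, x = mino n ∧ y = maj n) ∨
  (∃ k : ZMod 4, x = aug k ∧ y = aug k)

/-- The relation `ℒ`: the symmetric relation relating exactly `n_M` with `(n+4)_m`,
and each augmented triad with itself. -/
def Lrel : MRel := fun x y =>
  (∃ n : ZMod 12, x = maj n ∧ y = mino (n + 4)) ∨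
  (∃ n : ZMod 12, x = mino (n + 4) ∧ y = maj n) ∨
  (∃ k : ZMod 4, x = aug k ∧ y = aug k)

/-- Douthett's parsimonious relation `𝒮 = P_{1,0}` on major, minor and augmented triads. -/
def Srel : MRel := fun x y =>
  (∃ n : ZMod 12, x = maj n ∧ y = mino n) ∨
  (∃ n : ZMod 12, x = mino n ∧ y = maj n) ∨
  (∃ n : ZMod 12, x = maj n ∧ y = mino (n + 4)) ∨
  (∃ n : ZMod 12, x = mino (n + 4) ∧ y = maj n) ∨
  (∃ n : ZMod 12, x = maj n ∧ y = aug (m4 n)) ∨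
  (∃ n : ZMod 12, x = aug (m4 n) ∧ y = maj n) ∨
  (∃ n : ZMod 12, x = mino n ∧ y = aug (m4 (n + 3))) ∨
  (∃ n : ZMod 12, x = aug (m4 (n + 3)) ∧ y = mino n)

/-- Douthett's parsimonious relation `𝒯 = P_{2,0}` on major, minor and augmented triads. -/
def Trel : MRel := fun x y =>
  (∃ n : ZMod 12, x = maj n ∧ y = maj (n + 4)) ∨
  (∃ n : ZMod 12, x = maj n ∧ y = maj (n + 8)) ∨
  (∃ n : ZMod 12, x = maj n ∧ y = mino (n + 1)) ∨
  (∃ n : ZMod 12, x = mino (n + 1) ∧ y = maj n) ∨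
  (∃ n : ZMod 12, x = maj n ∧ y = mino (n + 5)) ∨
  (∃ n : ZMod 12, x = mino (n + 5) ∧ y = maj n) ∨
  (∃ n : ZMod 12, x = maj n ∧ y = aug (m4 (n + 3))) ∨
  (∃ n : ZMod 12, x = aug (m4 (n + 3)) ∧ y = maj n) ∨
  (∃ n : ZMod 12, x = mino n ∧ y = mino (n + 4)) ∨
  (∃ n : ZMod 12, x = mino n ∧ y = mino (n + 8)) ∨
  (∃ n : ZMod 12, x = mino n ∧ y = aug (m4 n)) ∨
  (∃ n : ZMod 12, x = aug (m4 n) ∧ y = mino n)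

def isAug : Htriads → Bool
  | Sum.inr (Sum.inr _) => true
  | _ => false

def cls : Htriads → ZMod 4
  | Sum.inl n => m4 n
  | Sum.inr (Sum.inl n) => m4 (n + 3)
  | Sum.inr (Sum.inr k) => k

def pinv : Htriads → Htriads
  | Sum.inl n => Sum.inr (Sum.inl n)
  | Sum.inr (Sum.inl n) => Sum.inl n
  | Sum.inr (Sum.inr k) => Sum.inr (Sum.inr k)

lemma Urel_iff (x y : Htriads) : Urel x y ↔ (isAug x ≠ isAug y ∧ cls x = cls y) := by
  rcases x with n | n | n <;> rcases y with m | m | m <;>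
    simp [Urel, maj, mino, aug, isAug, cls, eq_comm]

lemma Prel_iff (x y : Htriads) : Prel x y ↔ y = pinv x := by
  rcases x with n | n | n <;> rcases y with m | m | m <;>
    simp [Prel, maj, mino, aug, pinv, eq_comm]

lemma mul_iff (r s : MRel) (x z : Htriads) : (r * s) x z ↔ ∃ y, r x y ∧ s y z := Iff.rfl

set_option maxRecDepth 100000 in
lemma exU : ∀ (b : Bool) (k : ZMod 4), ∃ y : Htriads, isAug y = b ∧ cls y = k := by
  decide

lemma U2_iff (x z : Htriads) : (Urel ^ 2) x z ↔ (isAug x = isAug z ∧ cls x = cls z) := by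
  rw [pow_two, mul_iff]
  simp only [Urel_iff]
  constructor
  · rintro ⟨y, ⟨h1, h2⟩, h3, h4⟩
    refine ⟨?_, h2.trans h4⟩
    revert h1 h3
    cases isAug x <;> cases isAug y <;> cases isAug z <;> simp
  · rintro ⟨h1, h2⟩
    obtain ⟨y, h3, h4⟩ := exU (!isAug x) (cls x)
    refine ⟨y, ⟨?_, h4.symm⟩, ?_, h4.trans h2⟩
    · rw [h3]; cases isAug x <;> simp
    · rw [h3, h1]; cases isAug z <;> simp

/-- Pairs related by `U²·P·U²`. -/
def adjC (x z : Htriads) : Prop :=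
  isAug x = isAug z ∧ if isAug x then cls x = cls z else (cls z = cls x + 1 ∨ cls z = cls x + 3)

instance (x z : Htriads) : Decidable (adjC x z) := by unfold adjC; infer_instance

set_option maxRecDepth 100000 in
lemma step1 : ∀ (b : Bool) (k : ZMod 4) (c : Bool) (l : ZMod 4),
    (∃ y : Htriads, (b = isAug y ∧ k = cls y) ∧ (isAug (pinv y) = c ∧ cls (pinv y) = l)) ↔
      (b = c ∧ if b then k = l else (l = k + 1 ∨ l = k + 3)) := by
  decide

set_option maxRecDepth 100000 in
set_option maxHeartbeats 4000000 in
lemma step2 : ∀ x z : Htriads, adjC (pinv x) (pinv z) ↔ adjC x z := by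
  decide

lemma mid_iff (x z : Htriads) : (Urel ^ 2 * Prel * Urel ^ 2) x z ↔ adjC x z := by
  rw [mul_assoc, mul_iff]
  simp only [mul_iff, U2_iff, Prel_iff, exists_eq_left]
  exact step1 _ _ _ _

lemma pinv_pinv (x : Htriads) : pinv (pinv x) = x := by
  rcases x with n | n | n <;> rfl

/-- `U²·P·U² = P·U²·P·U²·P`. -/
theorem stmt4 :
    Urel ^ 2 * Prel * Urel ^ 2 = Prel * Urel ^ 2 * Prel * Urel ^ 2 * Prel := by
  have h : Prel * Urel ^ 2 * Prel * Urel ^ 2 * Prel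
      = Prel * ((Urel ^ 2 * Prel * Urel ^ 2) * Prel) := by simp only [mul_assoc]
  rw [h]
  funext x z
  apply propext
  rw [mid_iff, mul_iff]
  simp only [Prel_iff, exists_eq_left]
  rw [mul_iff]
  simp only [mid_iff, Prel_iff]
  constructor
  · intro h
    exact ⟨pinv z, (step2 x z).2 h, (pinv_pinv z).symm⟩
  · rintro ⟨y, h1, rfl⟩
    rw [← step2, pinv_pinv]
    exact h1
end

section
/- Let T be Douthett's parsimonious relation P_{2,0} on the 28-element set H of major, minor, and augmented triads. The submonoid of the monoid of binary relations on H generated by T has exactly 4 elements; equivalently, the relations 1, T, T², T³ are pairwise distinct and T⁴ = T³. -/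
def tb : Htriads → Htriads → Bool
  | .inl n, .inl p => (p == n + 4) || (p == n + 8)
  | .inl n, .inr (.inl p) => (p == n + 1) || (p == n + 5)
  | .inr (.inl p), .inl n => (p == n + 1) || (p == n + 5)
  | .inr (.inl n), .inr (.inl p) => (p == n + 4) || (p == n + 8)
  | .inl n, .inr (.inr k) => k.val == (n.val + 3) % 4
  | .inr (.inr k), .inl n => k.val == (n.val + 3) % 4
  | .inr (.inl n), .inr (.inr k) => k.val == n.val % 4
  | .inr (.inr k), .inr (.inl n) => k.val == n.val % 4
  | .inr (.inr _), .inr (.inr _) => false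

lemma m4_val : ∀ n : ZMod 12, (m4 n).val = n.val % 4 := by decide
lemma m4_val3 : ∀ n : ZMod 12, (m4 (n+3)).val = (n.val + 3) % 4 := by decide

lemma T_iff (x y : Htriads) : Trel x y ↔ tb x y = true := by
  have e : ∀ (k : ZMod 4) (n : ZMod 12), k = m4 n ↔ k.val = n.val % 4 := by
    intro k n; rw [← m4_val]; exact ⟨fun h => by rw [h], fun h => ZMod.val_injective 4 h⟩
  have e3 : ∀ (k : ZMod 4) (n : ZMod 12), k = m4 (n+3) ↔ k.val = (n.val+3) % 4 := by
    intro k n; rw [← m4_val3]; exact ⟨fun h => by rw [h], fun h => ZMod.val_injective 4 h⟩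
  rcases x with x | x | x <;> rcases y with y | y | y <;>
    simp [Trel, tb, maj, mino, aug, e, e3, -ZMod.natCast_val]
  all_goals aesop

/-- component -/
def cp : Htriads → ℕ
  | .inl n => n.val % 2
  | .inr (.inl n) => (n.val + 1) % 2
  | .inr (.inr n) => (n.val + 1) % 2

lemma mul_def' (r s : MRel) (x z) : (r * s) x z ↔ ∃ y, r x y ∧ s y z := Iff.rfl

/-- middle vertex condition -/
def t2 (x z : Htriads) : Prop := ∃ y, tb x y = true ∧ tb y z = true
instance : DecidableRel t2 := fun _ _ => by unfold t2; infer_instance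

lemma T2_iff (x z : Htriads) : (Trel ^ 2) x z ↔ t2 x z := by
  rw [pow_two, mul_def']; simp only [T_iff, t2]

set_option maxRecDepth 100000 in
lemma tb_cp : ∀ x y, tb x y = true → cp x = cp y := by decide +kernel

set_option maxRecDepth 100000 in
lemma ex3 : ∀ x y, cp x = cp y → ∃ w, tb x w = true ∧ t2 w y := by decide +kernel

lemma T3_iff (x z : Htriads) : (Trel ^ 3) x z ↔ cp x = cp z := by
  rw [pow_succ', mul_def']; simp only [T_iff, T2_iff]
  constructor
  · rintro ⟨y, h, w, h1, h2⟩
    rw [tb_cp _ _ h, tb_cp _ _ h1, tb_cp _ _ h2]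
  · exact ex3 x z

lemma T4 : Trel ^ 4 = Trel ^ 3 := by
  funext x z
  apply propext
  rw [pow_succ', mul_def']; simp only [T_iff, T3_iff]
  constructor
  · rintro ⟨y, h, h1⟩
    rw [tb_cp _ _ h, h1]
  · intro h
    obtain ⟨w, h1, -⟩ := ex3 x x rfl
    exact ⟨w, h1, by rw [← tb_cp _ _ h1, h]⟩

lemma pw : ([1, Trel, Trel ^ 2, Trel ^ 3] : List MRel).Pairwise (· ≠ ·) := by
  have one : ∀ x y, (1 : MRel) x y ↔ x = y := fun _ _ => Iff.rfl
  have key : ∀ r s : MRel, (∃ x y, ¬ (r x y ↔ s x y)) → r ≠ s := by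
    rintro r s ⟨x, y, h⟩ rfl; exact h Iff.rfl
  simp only [List.pairwise_cons, List.mem_cons, List.not_mem_nil, or_false, forall_eq_or_imp,
    forall_eq, false_imp_iff, implies_true, List.Pairwise.nil, and_true]
  refine ⟨⟨?_, ?_, ?_⟩, ⟨?_, ?_⟩, ?_⟩ <;> apply key <;> simp only [one, T_iff, T2_iff, T3_iff]
  all_goals decide +kernel

/-- the statement -/
theorem stmt14 :
    Nat.card (Submonoid.closure ({Trel} : Set MRel)) = 4 ∧
    ([1, Trel, Trel ^ 2, Trel ^ 3] : List MRel).Pairwise (· ≠ ·) ∧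
    Trel ^ 4 = Trel ^ 3 := by
  refine ⟨?_, pw, T4⟩
  have hn : ∀ n : ℕ, Trel ^ n ∈ [1, Trel, Trel ^ 2, Trel ^ 3] := by
    intro n
    induction n with
    | zero => simp
    | succ n ih =>
      simp only [List.mem_cons, List.not_mem_nil, or_false] at ih ⊢
      rw [pow_succ]
      rcases ih with h | h | h | h <;> rw [h]
      · simp
      · right; right; left; rw [pow_two]
      · right; right; right; rw [← pow_succ]
      · right; right; right; rw [← pow_succ, T4]
  classical
  have hs : ((Submonoid.closure ({Trel} : Set MRel) : Submonoid MRel) : Set MRel)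
      = (([1, Trel, Trel ^ 2, Trel ^ 3] : List MRel).toFinset : Set MRel) := by
    ext r
    simp only [SetLike.mem_coe, Submonoid.mem_closure_singleton, List.coe_toFinset, Set.mem_setOf_eq]
    constructor
    · rintro ⟨n, rfl⟩; exact hn n
    · simp only [List.mem_cons, List.not_mem_nil, or_false]
      rintro (h | h | h | h)
      · exact ⟨0, by simp [h]⟩
      · exact ⟨1, by simp [h]⟩
      · exact ⟨2, h.symm⟩
      · exact ⟨3, h.symm⟩
  change Nat.card (((Submonoid.closure ({Trel} : Set MRel) : Submonoid MRel) : Set MRel)) = 4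
  rw [hs, Nat.card_coe_set_eq, Set.ncard_coe_finset, List.toFinset_card_of_nodup pw]
  rfl
end
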